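/- The structural rule of cut is derivable in Gödel's natural deduction system G: for all formulas P, Q and finite lists of formulas Γ, Δ, if the sequents Γ → P and Δ,P → Q are provable in G, then the sequent Δ,Γ → Q is provable in G. -/

import Mathlib

/-- Formulas of Gödel's propositional language: variables, negation ∼, implication ⊃. -/
inductive Fml : Type
  | var : Nat → Fml
  | neg : Fml → Fml
  | imp : Fml → Fml → Fml

open Fml

/-- Provability of sequents Δ → P in Gödel's natural deduction system G.
    `Δ, P` is represented by `Δ ++ [P]` and `P, Δ` by `P :: Δ`. -/
inductive GProof : List Fml → Fml → Prop
  /-- axiom schema P → P -/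
  | ax (P : Fml) : GProof [P] P
  /-- left thinning -/
  | thinL (P : Fml) {Δ : List Fml} {Q : Fml} : GProof Δ Q → GProof (P :: Δ) Q
  /-- right thinning -/
  | thinR (P : Fml) {Δ : List Fml} {Q : Fml} : GProof Δ Q → GProof (Δ ++ [P]) Q
  /-- implication introduction -/
  | impI {Δ : List Fml} {P Q : Fml} : GProof (Δ ++ [P]) Q → GProof Δ (imp P Q)
  /-- additive implication elimination -/
  | impE {Δ : List Fml} {P Q : Fml} : GProof Δ P → GProof Δ (imp P Q) → GProof Δ Q
  /-- strong reductio ad absurdum -/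
  | raa {Δ : List Fml} {P Q : Fml} :
      GProof (Δ ++ [neg P]) Q → GProof (Δ ++ [neg P]) (neg Q) → GProof Δ P

namespace GProof

theorem thinL_append {Δ : List Fml} {Q : Fml} (Γ : List Fml) (h : GProof Δ Q) :
    GProof (Γ ++ Δ) Q := by
  induction Γ with
  | nil => exact h
  | cons A Γ ih => exact ih.thinL A

theorem thinR_append {Δ : List Fml} {Q : Fml} (Γ : List Fml) (h : GProof Δ Q) :
    GProof (Δ ++ Γ) Q := by
  induction Γ using List.reverseRecOn with
  | nil => rwa [List.append_nil]
  | append_singleton Γ A ih =>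
    rw [← List.append_assoc]
    exact ih.thinR A

theorem impE_append {Γ Δ : List Fml} {P Q : Fml} (hP : GProof Γ P) (hPQ : GProof Δ (imp P Q)) :
    GProof (Δ ++ Γ) Q :=
  impE (hP.thinL_append Δ) (hPQ.thinR_append Γ)

end GProof

/-- The structural rule of cut is derivable in Gödel's system G. -/
theorem cut_derivable (P Q : Fml) (Γ Δ : List Fml)
    (h1 : GProof Γ P) (h2 : GProof (Δ ++ [P]) Q) : GProof (Δ ++ Γ) Q :=
  GProof.impE_append h1 h2.impI
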